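/- Identify the plane with ℂ, and for a nonzero representation M of Q set Z(M) = Σ_{x=1}^{n+2} dim_k(M_x) · (p_x − p_{x−1}) ∈ ℂ. Then Z(M) lies in the strict right half plane, so one may write Z(M) = r e^{iπφ(M)} with r > 0 and φ(M) ∈ (−1/2, 1/2). With this stability function φ, every indecomposable representation M of Q is φ-stable: every subrepresentation L of M with L ≠ 0 and L ≠ M satisfies φ(L) < φ(M). -/

import Mathlib

open scoped Classical

noncomputable section

namespace CambrianA

/-! ### Combinatorics of a type `A_{n+2}` quiver.

Vertices are `1, …, n+2`.  For `1 ≤ i ≤ n+1`, `ε i = true` means that the arrow between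
`i` and `i+1` is oriented `i → i+1` (`i` is *upper-barred*), and `ε i = false` means it is
oriented `(i+1) → i` (`i` is *lower-barred*). -/

/-- `MaxIncr n ε i j` : the path `i → i+1 → ⋯ → j` is a maximal increasing path of `Q`. -/
def MaxIncr (n : ℕ) (ε : ℕ → Bool) (i j : ℕ) : Prop :=
  1 ≤ i ∧ i ≤ j ∧ j ≤ n + 2 ∧ (∀ ℓ, i ≤ ℓ → ℓ < j → ε ℓ = true) ∧
    (i = 1 ∨ ε (i - 1) = false) ∧ (j = n + 2 ∨ ε j = false)

/-- `MaxDecr n ε i j` : the path `i → i-1 → ⋯ → j` is a maximal decreasing path of `Q`. -/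
def MaxDecr (n : ℕ) (ε : ℕ → Bool) (i j : ℕ) : Prop :=
  1 ≤ j ∧ j ≤ i ∧ i ≤ n + 2 ∧ (∀ ℓ, j ≤ ℓ → ℓ < i → ε ℓ = false) ∧
    (i = n + 2 ∨ ε i = true) ∧ (j = 1 ∨ ε (j - 1) = true)

/-- Vertices of the polygon lying on the lower boundary: `0`, `n+2` and lower-barred ones. -/
def LowerVertex (n : ℕ) (ε : ℕ → Bool) (x : ℕ) : Prop :=
  x = 0 ∨ x = n + 2 ∨ (1 ≤ x ∧ x ≤ n + 1 ∧ ε x = false)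

/-- Vertices of the polygon lying on the upper boundary: `0`, `n+2` and upper-barred ones. -/
def UpperVertex (n : ℕ) (ε : ℕ → Bool) (x : ℕ) : Prop :=
  x = 0 ∨ x = n + 2 ∨ (1 ≤ x ∧ x ≤ n + 1 ∧ ε x = true)

/-- `(a,b)` is a lower boundary edge: `a < b` are consecutive lower vertices. -/
def LowerEdge (n : ℕ) (ε : ℕ → Bool) (a b : ℕ) : Prop :=
  LowerVertex n ε a ∧ LowerVertex n ε b ∧ a < b ∧
    ∀ c, LowerVertex n ε c → ¬(a < c ∧ c < b)

/-- `(a,b)` is an upper boundary edge: `a < b` are consecutive upper vertices. -/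
def UpperEdge (n : ℕ) (ε : ℕ → Bool) (a b : ℕ) : Prop :=
  UpperVertex n ε a ∧ UpperVertex n ε b ∧ a < b ∧
    ∀ c, UpperVertex n ε c → ¬(a < c ∧ c < b)

def BoundaryEdge (n : ℕ) (ε : ℕ → Bool) (a b : ℕ) : Prop :=
  LowerEdge n ε a b ∨ UpperEdge n ε a b

/-- `IsHook n ε a lo hi` : the hook of the arrow of `Q` between `a` and `a+1` is the
maximal path supported on the interval `[lo, hi]`.
If `ε a = true` (arrow `a → a+1`, source `a`), the hook is the maximal decreasing path
starting at `a`; if `ε a = false` (arrow `a+1 → a`, source `a+1`), the hook is the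
maximal increasing path starting at `a+1`. -/
def IsHook (n : ℕ) (ε : ℕ → Bool) (a lo hi : ℕ) : Prop :=
  if ε a = true then
    hi = a ∧ 1 ≤ lo ∧ lo ≤ a ∧ (∀ ℓ, lo ≤ ℓ → ℓ < a → ε ℓ = false) ∧
      (lo = 1 ∨ ε (lo - 1) = true)
  else
    lo = a + 1 ∧ a + 1 ≤ hi ∧ hi ≤ n + 2 ∧ (∀ ℓ, a + 1 ≤ ℓ → ℓ < hi → ε ℓ = true) ∧
      (hi = n + 2 ∨ ε hi = false)

/-- `IsCohook n ε a lo hi` : the cohook of the arrow of `Q` between `a` and `a+1` is the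
maximal path supported on the interval `[lo, hi]`, ending at the target of the arrow. -/
def IsCohook (n : ℕ) (ε : ℕ → Bool) (a lo hi : ℕ) : Prop :=
  if ε a = true then
    lo = a + 1 ∧ a + 1 ≤ hi ∧ hi ≤ n + 2 ∧ (∀ ℓ, a + 1 ≤ ℓ → ℓ < hi → ε ℓ = false) ∧
      (hi = n + 2 ∨ ε hi = true)
  else
    hi = a ∧ 1 ≤ lo ∧ lo ≤ a ∧ (∀ ℓ, lo ≤ ℓ → ℓ < a → ε ℓ = true) ∧
      (lo = 1 ∨ ε (lo - 1) = false)

/-- Counterclockwise neighbor `R⁻¹(ℓ)` of the vertex `ℓ` of the polygon `P(Q)`, for the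
cyclic order `0`, lower-barred vertices increasing, `n+2`, upper-barred vertices
decreasing. -/
def Rinv (n : ℕ) (ε : ℕ → Bool) (ℓ : ℕ) : ℕ :=
  if ℓ = n + 2 then sSup ({0} ∪ {x | 1 ≤ x ∧ x ≤ n + 1 ∧ ε x = true})
  else if 1 ≤ ℓ ∧ ℓ ≤ n + 1 ∧ ε ℓ = true then
    sSup ({0} ∪ {x | 1 ≤ x ∧ x < ℓ ∧ ε x = true})
  else
    sInf ({n + 2} ∪ {x | ℓ < x ∧ x ≤ n + 1 ∧ ε x = false})

/-- `γ(i′,j′)` is a pivot of `γ(i,j)`. -/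
def IsPivot (n : ℕ) (ε : ℕ → Bool) (i j i' j' : ℕ) : Prop :=
  (i' = Rinv n ε i ∧ j' = j ∧ Rinv n ε i < j) ∨
    (i' = i ∧ j' = Rinv n ε j ∧ i < Rinv n ε j)

/-! ### Geometry of the polygon `P(Q)`.

The plane is identified with `ℂ`; `p x` is the vertex of the polygon labeled `x`,
for `0 ≤ x ≤ n+2`. -/

/-- The hypotheses on the points `p 0, …, p (n+2)` realizing the polygon `P(Q)`:
strictly increasing `x`-coordinates; `p 0` and `p (n+2)` on a common horizontal line `L`;
upper-barred vertices above `L`, lower-barred vertices below `L`; convex position. -/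
def PolyPts (n : ℕ) (ε : ℕ → Bool) (p : ℕ → ℂ) : Prop :=
  (∀ a b, a < b → b ≤ n + 2 → (p a).re < (p b).re) ∧
    (p (n + 2)).im = (p 0).im ∧
    (∀ i, 1 ≤ i → i ≤ n + 1 →
      (ε i = true → (p 0).im < (p i).im) ∧ (ε i = false → (p i).im < (p 0).im)) ∧
    ∀ i, i ≤ n + 2 → p i ∉ convexHull ℝ (p '' {j | j ≤ n + 2 ∧ j ≠ i})

/-- The line segment `γ(e.1, e.2)` of the polygon. -/
def Seg (p : ℕ → ℂ) (e : ℕ × ℕ) : Set ℂ := segment ℝ (p e.1) (p e.2)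

/-- Two segments cross when they intersect in a point that is not a common endpoint. -/
def Cross (p : ℕ → ℂ) (e f : ℕ × ℕ) : Prop :=
  ∃ z, z ∈ Seg p e ∧ z ∈ Seg p f ∧
    ¬((z = p e.1 ∨ z = p e.2) ∧ (z = p f.1 ∨ z = p f.2))

/-- Slope of the segment `γ(e.1, e.2)`. -/
def slope (p : ℕ → ℂ) (e : ℕ × ℕ) : ℝ :=
  ((p e.2).im - (p e.1).im) / ((p e.2).re - (p e.1).re)

def ValidPair (n : ℕ) (e : ℕ × ℕ) : Prop := e.1 < e.2 ∧ e.2 ≤ n + 2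

/-- A triangulation of `P(Q)`: a maximal collection of pairwise noncrossing segments. -/
def IsTriangulation (n : ℕ) (p : ℕ → ℂ) (T : Finset (ℕ × ℕ)) : Prop :=
  (∀ e ∈ T, ValidPair n e) ∧ (∀ e ∈ T, ∀ f ∈ T, e ≠ f → ¬Cross p e f) ∧
    ∀ e, ValidPair n e → e ∉ T → ∃ f ∈ T, Cross p e f

/-- Cross product of two planar vectors; positive iff `(u, v)` is counterclockwise. -/
def cross2 (u v : ℂ) : ℝ := u.re * v.im - u.im * v.re

/-- Arrows of the adjacency quiver `Q(T)` of a triangulation `T`: `e → f` whenever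
`e` and `f` are sides of a common triangle of `T` and `f` follows `e` going
counterclockwise around that triangle. -/
def TriArrow (p : ℕ → ℂ) (T : Finset (ℕ × ℕ)) (e f : ℕ × ℕ) : Prop :=
  ∃ a b c : ℕ, a < b ∧ b < c ∧ (a, b) ∈ T ∧ (b, c) ∈ T ∧ (a, c) ∈ T ∧
    ((0 < cross2 (p b - p a) (p c - p a) ∧
        ((e = (a, b) ∧ f = (b, c)) ∨ (e = (b, c) ∧ f = (a, c)) ∨
          (e = (a, c) ∧ f = (a, b)))) ∨
      (cross2 (p b - p a) (p c - p a) < 0 ∧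
        ((e = (a, c) ∧ f = (b, c)) ∨ (e = (b, c) ∧ f = (a, b)) ∨
          (e = (a, b) ∧ f = (a, c)))))

/-! ### Representations of `Q` -/

/-- A finite dimensional representation of the quiver `Q` of type `A_{n+2}` over `k`.
The vector spaces are indexed by `ℕ`, and are required to vanish outside the set
`{1, …, n+2}` of vertices of `Q`.  For each `i`, `fwd i : V i → V (i+1)` is the structure
map of the arrow `i → i+1` (it is required to vanish when the arrow is oriented in the
other direction, i.e. `ε i = false`) and `bwd i : V (i+1) → V i` is the structure map of
the arrow `i+1 → i` (required to vanish when `ε i = true`). -/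
structure ARep (k : Type) [Field k] (n : ℕ) (ε : ℕ → Bool) where
  V : ℕ → Type
  [acg : ∀ x, AddCommGroup (V x)]
  [mod : ∀ x, Module k (V x)]
  [fdim : ∀ x, FiniteDimensional k (V x)]
  triv : ∀ x, x = 0 ∨ n + 2 < x → ∀ v : V x, v = 0
  fwd : ∀ i, V i →ₗ[k] V (i + 1)
  bwd : ∀ i, V (i + 1) →ₗ[k] V i
  fwd_zero : ∀ i, ε i = false → fwd i = 0
  bwd_zero : ∀ i, ε i = true → bwd i = 0

attribute [instance] ARep.acg ARep.mod ARep.fdim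

variable {k : Type} [Field k] {n : ℕ} {ε : ℕ → Bool}

/-- Morphisms of representations. -/
@[ext]
structure ARep.Hom (M N : ARep k n ε) where
  app : ∀ x, M.V x →ₗ[k] N.V x
  comm_fwd : ∀ i (v : M.V i), app (i + 1) (M.fwd i v) = N.fwd i (app i v)
  comm_bwd : ∀ i (v : M.V (i + 1)), app i (M.bwd i v) = N.bwd i (app (i + 1) v)

/-- The identity morphism. -/
def ARep.Hom.id (M : ARep k n ε) : M.Hom M :=
  ⟨fun _ => LinearMap.id, fun _ _ => rfl, fun _ _ => rfl⟩

/-- Composition of morphisms. -/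
def ARep.Hom.comp {M N P : ARep k n ε} (g : N.Hom P) (f : M.Hom N) : M.Hom P where
  app x := (g.app x).comp (f.app x)
  comm_fwd i v := by simp only [LinearMap.comp_apply, f.comm_fwd, g.comm_fwd]
  comm_bwd i v := by simp only [LinearMap.comp_apply, f.comm_bwd, g.comm_bwd]

/-- Sum of two morphisms. -/
def ARep.Hom.add {M N : ARep k n ε} (f g : M.Hom N) : M.Hom N where
  app x := f.app x + g.app x
  comm_fwd i v := by
    simp only [LinearMap.add_apply, f.comm_fwd, g.comm_fwd, map_add]
  comm_bwd i v := by
    simp only [LinearMap.add_apply, f.comm_bwd, g.comm_bwd, map_add]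

/-- Scalar multiple of a morphism. -/
def ARep.Hom.smul {M N : ARep k n ε} (c : k) (f : M.Hom N) : M.Hom N where
  app x := c • f.app x
  comm_fwd i v := by simp only [LinearMap.smul_apply, f.comm_fwd, map_smul]
  comm_bwd i v := by simp only [LinearMap.smul_apply, f.comm_bwd, map_smul]

/-- Isomorphism of representations. -/
def ARep.Iso (M N : ARep k n ε) : Prop :=
  ∃ f : M.Hom N, ∀ x, Function.Bijective (f.app x)

/-- The zero representation(s). -/
def ARep.IsZero (M : ARep k n ε) : Prop := ∀ x, ∀ v : M.V x, v = 0

/-- The support of a representation. -/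
def ARep.supp (M : ARep k n ε) : Set ℕ := {x | ∃ v : M.V x, v ≠ 0}

/-- Direct sum of two representations. -/
def ARep.dsum (M N : ARep k n ε) : ARep k n ε where
  V x := M.V x × N.V x
  acg _ := by infer_instance
  mod _ := by infer_instance
  fdim _ := by infer_instance
  triv x hx v := by
    have h1 := M.triv x hx v.1
    have h2 := N.triv x hx v.2
    exact Prod.ext h1 h2
  fwd i := (M.fwd i).prodMap (N.fwd i)
  bwd i := (M.bwd i).prodMap (N.bwd i)
  fwd_zero i h := by
    show (M.fwd i).prodMap (N.fwd i) = 0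
    rw [M.fwd_zero i h, N.fwd_zero i h]
    apply LinearMap.ext; rintro ⟨a, b⟩; simp
  bwd_zero i h := by
    show (M.bwd i).prodMap (N.bwd i) = 0
    rw [M.bwd_zero i h, N.bwd_zero i h]
    apply LinearMap.ext; rintro ⟨a, b⟩; simp

/-- One dimensional space `k` if `P` holds, `0` otherwise (as a submodule of `k`). -/
def fiber (k : Type) [Field k] (P : Prop) : Submodule k k := if P then ⊤ else ⊥

/-- The canonical map `fiber k P → fiber k Q` : "identity" if `P ∧ Q`, zero otherwise. -/
def fiberMap (k : Type) [Field k] (P Q : Prop) : fiber k P →ₗ[k] fiber k Q :=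
  if h : P ∧ Q then
    { toFun := fun v => ⟨(v : k), by
        have hf : fiber k Q = ⊤ := if_pos h.2
        rw [hf]
        exact Submodule.mem_top⟩
      map_add' := fun _ _ => rfl
      map_smul' := fun _ _ => rfl }
  else 0

/-- The zero representation. -/
def zeroRep (k : Type) [Field k] (n : ℕ) (ε : ℕ → Bool) : ARep k n ε where
  V _ := ↥(fiber k False)
  acg _ := by infer_instance
  mod _ := by infer_instance
  fdim _ := by infer_instance
  triv x _ v := by
    have hfib : fiber k False = ⊥ := if_neg (fun h : False => h.elim)
    obtain ⟨w, hw⟩ := v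
    apply Subtype.ext
    have hb : w ∈ (⊥ : Submodule k k) := hfib ▸ hw
    exact (Submodule.mem_bot k).1 hb
  fwd _ := 0
  bwd _ := 0
  fwd_zero _ _ := rfl
  bwd_zero _ _ := rfl

/-- The condition for a vertex `x` to be in the support of the interval representation
`M(i,j)`. -/
def SuppCond (n i j x : ℕ) : Prop := i ≤ x ∧ x ≤ j ∧ 1 ≤ x ∧ x ≤ n + 2

/-- The interval (string) representation `M(i,j)` of `Q`: one dimensional at each vertex
`x` with `i ≤ x ≤ j`, zero elsewhere, with identity maps on all arrows whose endpoints
both lie in `[i,j]`. -/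
def intervalRep (k : Type) [Field k] (n : ℕ) (ε : ℕ → Bool) (i j : ℕ) : ARep k n ε where
  V x := ↥(fiber k (SuppCond n i j x))
  acg _ := by infer_instance
  mod _ := by infer_instance
  fdim _ := by infer_instance
  triv x hx v := by
    have hP : ¬SuppCond n i j x := by simp only [SuppCond]; omega
    have hfib : fiber k (SuppCond n i j x) = ⊥ := if_neg hP
    obtain ⟨w, hw⟩ := v
    apply Subtype.ext
    have hb : w ∈ (⊥ : Submodule k k) := hfib ▸ hw
    exact (Submodule.mem_bot k).1 hb
  fwd ℓ :=
    if ε ℓ = true then fiberMap k (SuppCond n i j ℓ) (SuppCond n i j (ℓ + 1)) else 0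
  bwd ℓ :=
    if ε ℓ = true then 0 else fiberMap k (SuppCond n i j (ℓ + 1)) (SuppCond n i j ℓ)
  fwd_zero ℓ h := by simp [h]
  bwd_zero ℓ h := by simp [h]

/-- Direct sum of a list of representations. -/
def dsumList (k : Type) [Field k] (n : ℕ) (ε : ℕ → Bool) :
    List (ARep k n ε) → ARep k n ε
  | [] => zeroRep k n ε
  | M :: L => M.dsum (dsumList k n ε L)

/-- Indecomposable representations. -/
def ARep.Indec (M : ARep k n ε) : Prop :=
  ¬M.IsZero ∧ ∀ A B : ARep k n ε, M.Iso (A.dsum B) → A.IsZero ∨ B.IsZero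

/-- `A` is a direct summand of `T`. -/
def ARep.IsSummand (A T : ARep k n ε) : Prop := ∃ B : ARep k n ε, T.Iso (A.dsum B)

/-- A representation is basic when it has no repeated indecomposable direct summand. -/
def ARep.Basic (T : ARep k n ε) : Prop :=
  ∀ A : ARep k n ε, A.Indec → ¬(A.dsum A).IsSummand T

/-- A short exact sequence `0 → B → E → A → 0`. -/
structure SES (B A : ARep k n ε) where
  E : ARep k n ε
  ι : B.Hom E
  π : E.Hom A
  inj : ∀ x, Function.Injective (ι.app x)
  surj : ∀ x, Function.Surjective (π.app x)
  exct : ∀ x (v : E.V x), π.app x v = 0 ↔ ∃ u, ι.app x u = v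

/-- A short exact sequence splits. -/
def SES.Splits {B A : ARep k n ε} (σ : SES B A) : Prop :=
  ∃ r : σ.E.Hom B, ∀ x (v : B.V x), r.app x (σ.ι.app x v) = v

/-- `Ext¹(A, B) = 0` : every short exact sequence `0 → B → E → A → 0` splits. -/
def ExtZero (A B : ARep k n ε) : Prop := ∀ σ : SES B A, σ.Splits

/-- `Ext¹(A,B) ≅ k`, generated by (the class of) a short exact sequence
`0 → B → E → A → 0` with indecomposable middle term `E`: there is a non-split such
sequence `σ` with `σ.E` indecomposable such that every non-split sequence is equivalent
to a nonzero scalar multiple of `σ`. -/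
def ExtOneDimIndecMid (A B : ARep k n ε) : Prop :=
  ∃ σ : SES B A, ¬σ.Splits ∧ σ.E.Indec ∧
    ∀ τ : SES B A, ¬τ.Splits → ∃ c : k, c ≠ 0 ∧
      ∃ φ : σ.E.Hom τ.E, (∀ x, Function.Bijective (φ.app x)) ∧
        (∀ x (v : B.V x), φ.app x (σ.ι.app x v) = τ.ι.app x v) ∧
        (∀ x (v : σ.E.V x), τ.π.app x (φ.app x v) = c • σ.π.app x v)

/-- Almost rigid representations. -/
def AlmostRigid (T : ARep k n ε) : Prop :=
  T.Basic ∧ ∀ A B : ARep k n ε, A.Indec → B.Indec → A.IsSummand T → B.IsSummand T →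
    ExtZero A B ∨ ExtOneDimIndecMid A B

/-- Maximal almost rigid representations. -/
def MaxAlmostRigid (T : ARep k n ε) : Prop :=
  AlmostRigid T ∧ ∀ M : ARep k n ε, ¬M.IsZero → ¬AlmostRigid (T.dsum M)

/-- `f` is a section. -/
def ARep.Hom.IsSection {M N : ARep k n ε} (f : M.Hom N) : Prop :=
  ∃ g : N.Hom M, ∀ x (v : M.V x), g.app x (f.app x v) = v

/-- `f` is a retraction. -/
def ARep.Hom.IsRetraction {M N : ARep k n ε} (f : M.Hom N) : Prop :=
  ∃ g : N.Hom M, ∀ x (v : N.V x), f.app x (g.app x v) = v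

/-- Irreducible morphisms: `f` is neither a section nor a retraction, and in every
factorization `f = g ∘ h` either `h` is a section or `g` is a retraction. -/
def ARep.Hom.Irred {M N : ARep k n ε} (f : M.Hom N) : Prop :=
  ¬f.IsSection ∧ ¬f.IsRetraction ∧
    ∀ (Z : ARep k n ε) (h : M.Hom Z) (g : Z.Hom N),
      (∀ x (v : M.V x), f.app x v = g.app x (h.app x v)) → h.IsSection ∨ g.IsRetraction

/-- Subrepresentations : families of subspaces closed under the structure maps. -/
structure Subrep (M : ARep k n ε) where
  U : ∀ x, Submodule k (M.V x)
  fwd_mem : ∀ i, ∀ v ∈ U i, M.fwd i v ∈ U (i + 1)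
  bwd_mem : ∀ i, ∀ v ∈ U (i + 1), M.bwd i v ∈ U i

/-- The central charge `Z(M) = Σ_{x=1}^{n+2} dim_k(M_x) · (p_x − p_{x−1})`. -/
def charge (p : ℕ → ℂ) (M : ARep k n ε) : ℂ :=
  ∑ x ∈ Finset.Icc 1 (n + 2), (Module.finrank k (M.V x) : ℂ) * (p x - p (x - 1))

/-- The central charge of a subrepresentation. -/
def subCharge (p : ℕ → ℂ) {M : ARep k n ε} (L : Subrep M) : ℂ :=
  ∑ x ∈ Finset.Icc 1 (n + 2), (Module.finrank k (L.U x) : ℂ) * (p x - p (x - 1))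

/-- The representation `F(T) = ⊕_{γ(a,b) ∈ T} M(a+1, b)` attached to a collection `T` of
segments of the polygon `P(Q)`. -/
def FRep (k : Type) [Field k] (n : ℕ) (ε : ℕ → Bool) (T : Finset (ℕ × ℕ)) : ARep k n ε :=
  dsumList k n ε (T.toList.map fun e => intervalRep k n ε (e.1 + 1) e.2)

end CambrianA

namespace CambrianA

/-- A subrepresentation seen as a representation. -/
def subToRep {k : Type} [Field k] {n : ℕ} {ε : ℕ → Bool} {M : ARep k n ε} (L : Subrep M) :
    ARep k n ε where
  V x := ↥(L.U x)
  acg _ := by infer_instance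
  mod _ := by infer_instance
  fdim _ := by infer_instance
  triv x hx v := Subtype.ext (M.triv x hx v)
  fwd i := (M.fwd i).restrict (L.fwd_mem i)
  bwd i := (M.bwd i).restrict (L.bwd_mem i)
  fwd_zero i h := by
    apply LinearMap.ext; intro v; apply Subtype.ext
    simp [M.fwd_zero i h]
  bwd_zero i h := by
    apply LinearMap.ext; intro v; apply Subtype.ext
    simp [M.bwd_zero i h]

def kerSub {k : Type} [Field k] {n : ℕ} {ε : ℕ → Bool} {M : ARep k n ε} (e : M.Hom M) :
    Subrep M where
  U x := LinearMap.ker (e.app x)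
  fwd_mem i v hv := by
    rw [LinearMap.mem_ker] at *
    rw [e.comm_fwd, hv, map_zero]
  bwd_mem i v hv := by
    rw [LinearMap.mem_ker] at *
    rw [e.comm_bwd, hv, map_zero]

def rangeSub {k : Type} [Field k] {n : ℕ} {ε : ℕ → Bool} {M : ARep k n ε} (e : M.Hom M) :
    Subrep M where
  U x := LinearMap.range (e.app x)
  fwd_mem i v hv := by
    obtain ⟨w, rfl⟩ := hv
    exact ⟨M.fwd i w, e.comm_fwd i w⟩
  bwd_mem i v hv := by
    obtain ⟨w, rfl⟩ := hv
    exact ⟨M.bwd i w, e.comm_bwd i w⟩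

lemma idem_split {k : Type} [Field k] {n : ℕ} {ε : ℕ → Bool} {M : ARep k n ε} (hM : M.Indec)
    (e : M.Hom M) (he : ∀ x v, e.app x (e.app x v) = e.app x v) :
    (∀ x v, e.app x v = 0) ∨ (∀ x v, e.app x v = v) := by
  have hker : ∀ x (v : M.V x), (LinearMap.id - e.app x : M.V x →ₗ[k] M.V x) v ∈ LinearMap.ker (e.app x) := by
    intro x v
    simp [he]
  have hiso : M.Iso ((subToRep (rangeSub e)).dsum (subToRep (kerSub e))) := by
    refine ⟨⟨fun x => LinearMap.prod ((e.app x).rangeRestrict)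
      ((LinearMap.id - e.app x).codRestrict (LinearMap.ker (e.app x)) (hker x)), ?_, ?_⟩, ?_⟩
    · intro i v
      refine Prod.ext (Subtype.ext ?_) (Subtype.ext ?_)
      · exact e.comm_fwd i v
      · show M.fwd i v - e.app (i + 1) (M.fwd i v) = M.fwd i (v - e.app i v)
        rw [e.comm_fwd, map_sub]
    · intro i v
      refine Prod.ext (Subtype.ext ?_) (Subtype.ext ?_)
      · exact e.comm_bwd i v
      · show M.bwd i v - e.app i (M.bwd i v) = M.bwd i (v - e.app (i + 1) v)
        rw [e.comm_bwd, map_sub]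
    · intro x
      constructor
      · intro v w hvw
        have h1 : e.app x v = e.app x w := congrArg (fun z => ((Prod.fst z).1 : M.V x)) hvw
        have h2 : v - e.app x v = w - e.app x w :=
          congrArg (fun z => ((Prod.snd z).1 : M.V x)) hvw
        rw [h1] at h2
        exact sub_left_injective h2
      · rintro ⟨⟨r, ⟨s, hs⟩⟩, ⟨t, ht⟩⟩
        have ht' : e.app x t = 0 := ht
        have hr : e.app x r = r := by rw [← hs, he]
        refine ⟨r + t, Prod.ext (Subtype.ext ?_) (Subtype.ext ?_)⟩
        · show e.app x (r + t) = r
          rw [map_add, ht', hr, add_zero]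
        · show r + t - e.app x (r + t) = t
          rw [map_add, ht', hr]; abel
  rcases hM.2 _ _ hiso with h | h
  · left
    intro x v
    exact congrArg Subtype.val (h x ⟨e.app x v, ⟨v, rfl⟩⟩)
  · right
    intro x v
    have h0 : e.app x (v - e.app x v) = 0 := by simp [he]
    have := congrArg Subtype.val (h x ⟨v - e.app x v, h0⟩)
    exact (sub_eq_zero.1 this).symm

/-- The rank one endomorphism `w ↦ f w • v` extends to the right of `x`. -/
def ExtR {k : Type} [Field k] {n : ℕ} {ε : ℕ → Bool} (M : ARep k n ε) (x : ℕ)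
    (v : M.V x) (f : M.V x →ₗ[k] k) : Prop :=
  ∃ e : ∀ y, M.V y →ₗ[k] M.V y, e x = f.smulRight v ∧
    (∀ y, x ≤ y → ∀ w, e y (e y w) = e y w) ∧
    (∀ y, x ≤ y → ∃ u : M.V y, ∀ w, ∃ c : k, e y w = c • u) ∧
    (∀ i, x ≤ i → ∀ w, e (i + 1) (M.fwd i w) = M.fwd i (e i w)) ∧
    (∀ i, x ≤ i → ∀ w, e i (M.bwd i w) = M.bwd i (e (i + 1) w))

def GoodPair {k : Type} [Field k] {n : ℕ} {ε : ℕ → Bool} (M : ARep k n ε) (x : ℕ)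
    (A B : Submodule k (M.V x)) : Prop :=
  ∀ v ∈ B, ∀ f : M.V x →ₗ[k] k, (∀ w ∈ A, f w = 0) → f v = 1 → ExtR M x v f

lemma extR_step {k : Type} [Field k] {n : ℕ} {ε : ℕ → Bool} (M : ARep k n ε) (x : ℕ)
    (v : M.V x) (f : M.V x →ₗ[k] k) (hfv : f v = 1)
    (e : ∀ y, M.V y →ₗ[k] M.V y)
    (h1 : ∀ y, x + 1 ≤ y → ∀ w, e y (e y w) = e y w)
    (h2 : ∀ y, x + 1 ≤ y → ∃ u : M.V y, ∀ w, ∃ c : k, e y w = c • u)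
    (h3 : ∀ i, x + 1 ≤ i → ∀ w, e (i + 1) (M.fwd i w) = M.fwd i (e i w))
    (h4 : ∀ i, x + 1 ≤ i → ∀ w, e i (M.bwd i w) = M.bwd i (e (i + 1) w))
    (h5 : ∀ w, e (x + 1) (M.fwd x w) = f w • M.fwd x v)
    (h6 : ∀ w, f (M.bwd x w) • v = M.bwd x (e (x + 1) w)) : ExtR M x v f := by
  have key : ∀ y, x + 1 ≤ y → Function.update e x (f.smulRight v) y = e y := fun y hy =>
    Function.update_of_ne (by omega) _ _
  have key0 : Function.update e x (f.smulRight v) x = f.smulRight v :=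
    Function.update_self _ _ _
  refine ⟨Function.update e x (f.smulRight v), key0, ?_, ?_, ?_, ?_⟩
  · intro y hy w
    rcases hy.eq_or_lt with rfl | hy
    · rw [key0]; simp [hfv]
    · rw [key y hy]; exact h1 y hy w
  · intro y hy
    rcases hy.eq_or_lt with rfl | hy
    · rw [key0]; exact ⟨v, fun w => ⟨f w, rfl⟩⟩
    · rw [key y hy]; exact h2 y hy
  · intro y hy w
    rw [key (y + 1) (by omega)]
    rcases hy.eq_or_lt with rfl | hy
    · rw [key0, h5]; simp
    · rw [key y hy]; exact h3 y hy w
  · intro y hy w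
    rw [key (y + 1) (by omega)]
    rcases hy.eq_or_lt with rfl | hy
    · rw [key0, ← h6]; simp
    · rw [key y hy]; exact h4 y hy w

lemma chain_zero {k : Type} [Field k] {n : ℕ} {ε : ℕ → Bool} (M : ARep k n ε) (x : ℕ)
    (hx : n + 2 < x) : Relation.ReflTransGen (GoodPair M x) ⊥ ⊤ := by
  have : (⊥ : Submodule k (M.V x)) = ⊤ := by
    apply le_antisymm bot_le
    intro v _
    rw [M.triv x (Or.inr hx) v]; exact Submodule.zero_mem _
  rw [this]

lemma exists_factor {k : Type} [Field k] {V W : Type} [AddCommGroup V] [Module k V]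
    [AddCommGroup W] [Module k W] (φ : V →ₗ[k] W) (A : Submodule k W)
    (f : V →ₗ[k] k) (hf : ∀ w ∈ A.comap φ, f w = 0) :
    ∃ g : W →ₗ[k] k, (∀ w ∈ A, g w = 0) ∧ ∀ v, g (φ v) = f v := by
  have h : f ∈ LinearMap.range (A.mkQ.comp φ).dualMap := by
    rw [LinearMap.range_dualMap_eq_dualAnnihilator_ker, Submodule.mem_dualAnnihilator]
    intro w hw
    apply hf
    simpa using hw
  obtain ⟨g, hg⟩ := h
  refine ⟨g.comp A.mkQ, ?_, ?_⟩
  · intro w hw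
    have : A.mkQ w = 0 := by simpa using hw
    rw [LinearMap.comp_apply, this, map_zero]
  · intro v
    rw [← hg]; rfl

lemma chain_step {k : Type} [Field k] {n : ℕ} {ε : ℕ → Bool} (M : ARep k n ε) (x : ℕ)
    (h : Relation.ReflTransGen (GoodPair M (x + 1)) ⊥ ⊤) :
    Relation.ReflTransGen (GoodPair M x) ⊥ ⊤ := by
  cases hε : ε x with
  | true =>
    have hb := M.bwd_zero x hε
    have hl : Relation.ReflTransGen (GoodPair M x) (Submodule.comap (M.fwd x) ⊥)
        (Submodule.comap (M.fwd x) ⊤) := by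
      refine Relation.ReflTransGen.lift (Submodule.comap (M.fwd x)) ?_ _ _ h
      intro A B hAB v hv f hf hfv
      obtain ⟨g, hgA, hg⟩ := exists_factor (M.fwd x) A f hf
      obtain ⟨e, h0, h1, h2, h3, h4⟩ := hAB (M.fwd x v) hv g hgA (by rw [hg, hfv])
      refine extR_step M x v f hfv e h1 h2 h3 h4 ?_ ?_
      · intro w; rw [h0]; simp [hg]
      · intro w; rw [hb]; simp
    rw [Submodule.comap_top] at hl
    refine Relation.ReflTransGen.head ?_ hl
    intro v hv f hf hfv
    have hv' : M.fwd x v = 0 := by simpa using hv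
    refine extR_step M x v f hfv (fun _ => 0) ?_ ?_ ?_ ?_ ?_ ?_
    · simp
    · intro y _; exact ⟨0, fun w => ⟨0, by simp⟩⟩
    · simp
    · simp
    · simp [hv']
    · simp [hb]
  | false =>
    have hb := M.fwd_zero x hε
    have hl : Relation.ReflTransGen (GoodPair M x) (Submodule.map (M.bwd x) ⊥)
        (Submodule.map (M.bwd x) ⊤) := by
      refine Relation.ReflTransGen.lift (Submodule.map (M.bwd x)) ?_ _ _ h
      rintro A B hAB v ⟨u, hu, rfl⟩ f hf hfv
      obtain ⟨e, h0, h1, h2, h3, h4⟩ := hAB u hu (f.comp (M.bwd x))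
        (fun w hw => hf _ ⟨w, hw, rfl⟩) hfv
      refine extR_step M x _ f hfv e h1 h2 h3 h4 ?_ ?_
      · intro w; rw [hb]; simp
      · intro w; rw [h0]; simp
    rw [Submodule.map_bot] at hl
    refine Relation.ReflTransGen.tail hl ?_
    intro v hv f hf hfv
    refine extR_step M x v f hfv (fun _ => 0) ?_ ?_ ?_ ?_ ?_ ?_
    · simp
    · intro y _; exact ⟨0, fun w => ⟨0, by simp⟩⟩
    · simp
    · simp
    · simp [hb]
    · intro w
      rw [hf _ ⟨w, trivial, rfl⟩]; simp

lemma chain_all {k : Type} [Field k] {n : ℕ} {ε : ℕ → Bool} (M : ARep k n ε) (x : ℕ) :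
    Relation.ReflTransGen (GoodPair M x) ⊥ ⊤ := by
  have : ∀ d x, n + 2 < x + d → Relation.ReflTransGen (GoodPair M x) ⊥ ⊤ := by
    intro d
    induction d with
    | zero => intro x hx; exact chain_zero M x hx
    | succ d ih => intro x hx; exact chain_step M x (ih (x + 1) (by omega))
  exact this (n + 3) x (by omega)

lemma exists_ext {k : Type} [Field k] {n : ℕ} {ε : ℕ → Bool} (M : ARep k n ε) (x : ℕ)
    (hx : ∃ v : M.V x, v ≠ 0) : ∃ v f, f v = 1 ∧ ExtR M x v f := by
  by_contra hcon
  have hle : ∀ A B, GoodPair M x A B → B ≤ A := by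
    intro A B hAB v hv
    by_contra hvA
    obtain ⟨f, hf1, hf2⟩ := Submodule.exists_le_ker_of_notMem hvA
    refine hcon ⟨v, (f v)⁻¹ • f, ?_, hAB v hv _ ?_ ?_⟩
    · simp [hf1]
    · intro w hw
      have : f w = 0 := hf2 hw
      simp [this]
    · simp [hf1]
  have hall : ∀ B, Relation.ReflTransGen (GoodPair M x) ⊥ B → B = ⊥ := by
    intro B hB
    induction hB with
    | refl => rfl
    | tail _ h ih => rw [ih] at h; exact le_bot_iff.1 (hle _ _ h)
  obtain ⟨v, hv⟩ := hx
  have ht := hall _ (chain_all M x)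
  have : v ∈ (⊤ : Submodule k (M.V x)) := trivial
  rw [ht] at this
  exact hv (by simpa using this)

lemma indec_thin {k : Type} [Field k] {n : ℕ} {ε : ℕ → Bool} {M : ARep k n ε} (hM : M.Indec)
    (y : ℕ) : Module.finrank k (M.V y) ≤ 1 := by
  have hex : ∃ x, ∃ v : M.V x, v ≠ 0 := by
    have := hM.1
    unfold ARep.IsZero at this
    push Not at this
    exact this
  have hmin : ∀ z, z < Nat.find hex → ∀ v : M.V z, v = 0 := by
    intro z hz v
    by_contra hv
    exact Nat.find_min hex hz ⟨v, hv⟩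
  have hspec := Nat.find_spec hex
  generalize Nat.find hex = a at hmin hspec
  obtain ⟨v, f, hfv, e, h0, h1, h2, h3, h4⟩ := exists_ext M a hspec
  let E : M.Hom M := ⟨e, by
    intro i w
    by_cases hi : a ≤ i
    · exact h3 i hi w
    · rw [hmin i (by omega) w]; simp, by
    intro i w
    by_cases hi : a ≤ i
    · exact h4 i hi w
    · rw [hmin i (by omega) (e i _), hmin i (by omega) (M.bwd i _)]⟩
  have hid : ∀ x w, e x (e x w) = e x w := by
    intro x w
    by_cases hi : a ≤ x
    · exact h1 x hi w
    · rw [hmin x (by omega) w]; simp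
  rcases idem_split hM E hid with h | h
  · exfalso
    have hv : e a v = 0 := h a v
    rw [h0] at hv
    have : v = 0 := by simpa [hfv] using hv
    rw [this] at hfv
    simp at hfv
  · by_cases hy : a ≤ y
    · obtain ⟨u, hu⟩ := h2 y hy
      refine finrank_le_one u ?_
      intro w
      obtain ⟨c, hc⟩ := hu w
      exact ⟨c, by rw [← hc]; exact h y w⟩
    · refine finrank_le_one 0 ?_
      intro w
      exact ⟨0, by rw [hmin y (by omega) w]; simp⟩

lemma indec_conn {k : Type} [Field k] {n : ℕ} {ε : ℕ → Bool} {M : ARep k n ε} (hM : M.Indec)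
    {y x z : ℕ} (hyx : y ≤ x) (hxz : x < z) (hy : ∃ v : M.V y, v ≠ 0)
    (hz : ∃ v : M.V z, v ≠ 0) : M.fwd x ≠ 0 ∨ M.bwd x ≠ 0 := by
  by_contra hcon
  push Not at hcon
  let E : M.Hom M := ⟨fun t => if t ≤ x then LinearMap.id else 0, by
    intro i w
    rcases lt_trichotomy i x with h | h | h
    · simp [h.le, Nat.succ_le_of_lt h]
    · subst h; simp [hcon.1]
    · simp [show ¬ i ≤ x by omega, show ¬ i + 1 ≤ x by omega], by
    intro i w
    rcases lt_trichotomy i x with h | h | h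
    · simp [h.le, Nat.succ_le_of_lt h]
    · subst h; simp [hcon.2]
    · simp [show ¬ i ≤ x by omega, show ¬ i + 1 ≤ x by omega]⟩
  have hE : ∀ t, E.app t = if t ≤ x then LinearMap.id else 0 := fun _ => rfl
  rcases idem_split hM E (by
      intro t w
      by_cases h : t ≤ x <;> simp [hE, h]) with h | h
  · obtain ⟨v, hv⟩ := hy
    have := h y v
    rw [hE, if_pos hyx] at this
    exact hv this
  · obtain ⟨v, hv⟩ := hz
    have := h z v
    rw [hE, if_neg (by omega)] at this
    exact hv this.symm

/-! ### Geometry -/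

lemma sum_parts (l q : ℕ → ℝ) (a b : ℕ) (hab : a ≤ b) :
    ∑ x ∈ Finset.Icc a b, l x * (q x - q (x - 1)) =
      l b * q b - l a * q (a - 1) + ∑ x ∈ Finset.Ico a b, q x * (l x - l (x + 1)) := by
  induction b, hab using Nat.le_induction with
  | base => simp; ring
  | succ b hab ih =>
    rw [← Finset.insert_Icc_right_eq_Icc_add_one (by omega), Finset.sum_insert (by simp), ih,
      Finset.sum_Ico_succ_top hab]
    simp; ring

lemma hull_aux (n : ℕ) (ε : ℕ → Bool) (p : ℕ → ℂ) (hp : PolyPts n ε p)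
    (s : ℝ) (hs : s = 1 ∨ s = -1) (c x b : ℕ) (hcx : c < x)
    (hxb : x < b) (hb : b ≤ n + 2) (hL : 0 < s * ((p 0).im - (p x).im)) :
    s * cross2 (p b - p c) (p x - p c) < 0 := by
  obtain ⟨h1, h2, h3, h4⟩ := hp
  by_contra hcon
  push Not at hcon
  refine h4 x (by omega) ?_
  set S := convexHull ℝ (p '' {j | j ≤ n + 2 ∧ j ≠ x}) with hS
  have hconv : Convex ℝ S := convex_convexHull ℝ _
  have mem : ∀ j, j ≤ n + 2 → j ≠ x → p j ∈ S := fun j hj hjx =>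
    subset_convexHull ℝ _ ⟨j, ⟨hj, hjx⟩, rfl⟩
  have hpt : ∀ i j, i ≤ n + 2 → j ≤ n + 2 → i < x → x < j → ∃ z ∈ S, z.re = (p x).re ∧
      z.im * ((p j).re - (p i).re) = ((p j).re - (p x).re) * (p i).im +
        ((p x).re - (p i).re) * (p j).im := by
    intro i j hi hj hix hxj
    have hA := h1 i x hix (by omega)
    have hB := h1 x j hxj hj
    have hD : 0 < (p j).re - (p i).re := by linarith
    refine ⟨(((p j).re - (p x).re) / ((p j).re - (p i).re)) • p i +
      (((p x).re - (p i).re) / ((p j).re - (p i).re)) • p j,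
      hconv (mem i hi (by omega)) (mem j hj (by omega))
        (div_nonneg (by linarith) hD.le) (div_nonneg (by linarith) hD.le) ?_, ?_, ?_⟩
    · field_simp; ring
    · simp only [Complex.add_re, Complex.smul_re, smul_eq_mul]
      field_simp; ring
    · simp only [Complex.add_im, Complex.smul_im, smul_eq_mul]
      field_simp
  obtain ⟨z, hzS, hzr, hzi⟩ := hpt 0 (n + 2) (by omega) le_rfl (by omega) (by omega)
  obtain ⟨w, hwS, hwr, hwi⟩ := hpt c b (by omega) hb hcx hxb
  have hzi' : z.im = (p 0).im := by
    have := h1 0 (n + 2) (by omega) le_rfl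
    rw [h2] at hzi
    have h5 : ((p (n + 2)).re - (p 0).re) ≠ 0 := by linarith
    apply mul_right_cancel₀ h5
    rw [hzi]; ring
  have hcb := h1 c b (by omega) hb
  have hw : 0 ≤ s * ((p x).im - w.im) := by
    have h6 : s * cross2 (p b - p c) (p x - p c) =
        s * ((p x).im - w.im) * ((p b).re - (p c).re) := by
      unfold cross2
      simp only [Complex.sub_re, Complex.sub_im]
      linear_combination s * hwi
    rw [h6] at hcon
    exact nonneg_of_mul_nonneg_left hcon (by linarith)
  -- p x lies on the vertical segment from w to z
  have hD : 0 < s * (z.im - w.im) := by rw [hzi']; linarith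
  have hD' : z.im - w.im ≠ 0 := by rintro h; rw [h] at hD; simp at hD
  have hsplit : p x = ((s * (z.im - (p x).im)) / (s * (z.im - w.im))) • w +
      ((s * ((p x).im - w.im)) / (s * (z.im - w.im))) • z := by
    have hs0 : s ≠ 0 := by rcases hs with h | h <;> rw [h] <;> norm_num
    apply Complex.ext
    · simp only [Complex.add_re, Complex.smul_re, smul_eq_mul, hzr, hwr]
      field_simp; ring
    · simp only [Complex.add_im, Complex.smul_im, smul_eq_mul]
      field_simp; ring
  rw [hsplit]
  refine hconv hwS hzS (div_nonneg ?_ hD.le) (div_nonneg hw hD.le) ?_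
  · rw [hzi']; exact hL.le
  · rw [← add_div, div_eq_one_iff_eq hD.ne']; ring

lemma charge_re_pos (n : ℕ) (p : ℕ → ℂ)
    (h : ∀ a b, a < b → b ≤ n + 2 → (p a).re < (p b).re) (d : ℕ → ℕ)
    (hd : ∃ x, 1 ≤ x ∧ x ≤ n + 2 ∧ d x ≠ 0) :
    0 < (∑ x ∈ Finset.Icc 1 (n + 2), (d x : ℂ) * (p x - p (x - 1))).re := by
  have hre : (∑ x ∈ Finset.Icc 1 (n + 2), (d x : ℂ) * (p x - p (x - 1))).re =
      ∑ x ∈ Finset.Icc 1 (n + 2), (d x : ℝ) * ((p x).re - (p (x - 1)).re) := by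
    rw [Complex.re_sum]; simp
  rw [hre]
  obtain ⟨x, hx1, hx2, hx3⟩ := hd
  have hlt : ∀ y ∈ Finset.Icc 1 (n + 2), 0 < (p y).re - (p (y - 1)).re := by
    intro y hy
    rw [Finset.mem_Icc] at hy
    have := h (y - 1) y (by omega) hy.2
    linarith
  refine Finset.sum_pos' (fun y hy => mul_nonneg (Nat.cast_nonneg _) (hlt y hy).le)
    ⟨x, by simp; omega, mul_pos ?_ (hlt x (by simp; omega))⟩
  exact_mod_cast Nat.pos_of_ne_zero hx3

lemma arg_lt_of_cross {u v : ℂ} (hu : 0 < u.re) (hv : 0 < v.re) (h : cross2 v u < 0) :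
    Complex.arg u < Complex.arg v := by
  have hu' := Complex.abs_arg_lt_pi_div_two_iff.2 (Or.inl hu)
  have hv' := Complex.abs_arg_lt_pi_div_two_iff.2 (Or.inl hv)
  rw [abs_lt] at hu' hv'
  rw [← Real.strictMonoOn_tan.lt_iff_lt hu' hv', Complex.tan_arg, Complex.tan_arg,
    div_lt_div_iff₀ hu hv]
  unfold cross2 at h
  linarith

lemma stable {k : Type} [Field k] {n : ℕ} {ε : ℕ → Bool} {p : ℕ → ℂ}
    (hp : PolyPts n ε p) {M : ARep k n ε} (hM : M.Indec) (L : Subrep M)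
    (hL0 : ∃ x, L.U x ≠ ⊥) (hL1 : ∃ x, L.U x ≠ ⊤) :
    cross2 (charge p M) (subCharge p L) < 0 := by
  have hbound : ∀ x, (∃ v : M.V x, v ≠ 0) → 1 ≤ x ∧ x ≤ n + 2 := by
    rintro x ⟨v, hv⟩
    by_contra hc
    exact hv (M.triv x (by omega) v)
  have hex : ∃ x, ∃ v : M.V x, v ≠ 0 := by
    have := hM.1
    unfold ARep.IsZero at this
    push Not at this
    exact this
  -- leftmost and rightmost vertices of the support
  obtain ⟨a, ha, hamin⟩ : ∃ a, (∃ v : M.V a, v ≠ 0) ∧ ∀ z, (∃ v : M.V z, v ≠ 0) → a ≤ z :=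
    ⟨Nat.find hex, Nat.find_spec hex, fun z hz => Nat.find_min' hex hz⟩
  obtain ⟨b, hb, hbmax⟩ : ∃ b, (∃ v : M.V b, v ≠ 0) ∧ ∀ z, (∃ v : M.V z, v ≠ 0) → z ≤ b :=
    ⟨Nat.findGreatest (fun x => ∃ v : M.V x, v ≠ 0) (n + 2),
      Nat.findGreatest_spec (P := fun x => ∃ v : M.V x, v ≠ 0) (hbound a ha).2 ha,
      fun z hz => Nat.le_findGreatest (hbound z hz).2 hz⟩
  have hab := hamin b hb
  have ha1 := (hbound a ha).1
  have hb2 := (hbound b hb).2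
  have hconn : ∀ x, a ≤ x → x < b → M.fwd x ≠ 0 ∨ M.bwd x ≠ 0 := fun x h1 h2 =>
    indec_conn hM h1 h2 ha hb
  have hnz : ∀ x, a ≤ x → x ≤ b → ∃ v : M.V x, v ≠ 0 := by
    intro x h1 h2
    by_contra hc
    push Not at hc
    rcases h2.eq_or_lt with rfl | h2
    · obtain ⟨v, hv⟩ := hb; exact hv (hc v)
    rcases hconn x h1 h2 with h | h
    · apply h; apply LinearMap.ext; intro v; rw [hc v]; simp
    · apply h; apply LinearMap.ext; intro v; exact hc _
  have hz : ∀ x, ¬ (a ≤ x ∧ x ≤ b) → ∀ v : M.V x, v = 0 := by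
    intro x hx v
    by_contra hv
    exact hx ⟨hamin x ⟨v, hv⟩, hbmax x ⟨v, hv⟩⟩
  have hd1 : ∀ x, a ≤ x → x ≤ b → Module.finrank k (M.V x) = 1 := by
    intro x h1 h2
    refine le_antisymm (indec_thin hM x) ?_
    obtain ⟨v, hv⟩ := hnz x h1 h2
    exact Module.finrank_pos_iff_exists_ne_zero.2 ⟨v, hv⟩
  have hd0 : ∀ x, ¬ (a ≤ x ∧ x ≤ b) → Module.finrank k (M.V x) = 0 := by
    intro x hx
    have : Subsingleton (M.V x) := ⟨fun u v => by rw [hz x hx u, hz x hx v]⟩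
    exact Module.finrank_zero_of_subsingleton
  set l : ℕ → ℕ := fun x => Module.finrank k (L.U x) with hl
  have hld : ∀ x, l x ≤ Module.finrank k (M.V x) := fun x => Submodule.finrank_le _
  have hcases : ∀ x, l x = 0 ∨ l x = 1 := fun x => by
    have := (hld x).trans (indec_thin hM x); omega
  have hbot : ∀ x, l x = 0 → L.U x = ⊥ := fun x hx => Submodule.finrank_eq_zero.1 hx
  have htop : ∀ x, l x = 1 → L.U x = ⊤ := fun x hx =>
    Submodule.eq_top_of_finrank_eq (by
      have h1 := hld x
      have h2 := indec_thin hM x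
      have h3 : Module.finrank k (L.U x) = 1 := hx
      omega)
  -- monotonicity of `l` along arrows
  have hup : ∀ x, a ≤ x → x < b → ε x = true → l x = 1 → l (x + 1) = 1 := by
    intro x h1 h2 hε hlx
    rcases hcases (x + 1) with h | h
    · exfalso
      have hf : M.fwd x ≠ 0 := by
        rcases hconn x h1 h2 with h | h
        · exact h
        · exact absurd (M.bwd_zero x hε) h
      apply hf
      apply LinearMap.ext
      intro v
      have := L.fwd_mem x v (by rw [htop x hlx]; trivial)
      rw [hbot _ h] at this
      simpa using this
    · exact h
  have hdown : ∀ x, a ≤ x → x < b → ε x = false → l (x + 1) = 1 → l x = 1 := by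
    intro x h1 h2 hε hlx
    rcases hcases x with h | h
    · exfalso
      have hf : M.bwd x ≠ 0 := by
        rcases hconn x h1 h2 with h | h
        · exact absurd (M.fwd_zero x hε) h
        · exact h
      apply hf
      apply LinearMap.ext
      intro v
      have := L.bwd_mem x v (by rw [htop _ hlx]; trivial)
      rw [hbot _ h] at this
      simpa using this
    · exact h
  have hsum : ∀ d : ℕ → ℕ, (∀ x, ¬ (a ≤ x ∧ x ≤ b) → d x = 0) →
      ∑ x ∈ Finset.Icc 1 (n + 2), (d x : ℂ) * (p x - p (x - 1)) =
      ∑ x ∈ Finset.Icc a b, (d x : ℂ) * (p x - p (x - 1)) := by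
    intro d hd
    symm
    apply Finset.sum_subset
    · intro x hx; rw [Finset.mem_Icc] at *; omega
    · intro x _ hx
      rw [Finset.mem_Icc] at hx
      rw [hd x hx]; simp
  have hcM : charge p M = p b - p (a - 1) := by
    unfold charge
    rw [hsum (fun x => Module.finrank k (M.V x)) hd0]
    have : ∀ x ∈ Finset.Icc a b, ((Module.finrank k (M.V x) : ℕ) : ℂ) * (p x - p (x - 1)) =
        p x - p (x - 1) := by
      intro x hx
      rw [Finset.mem_Icc] at hx
      rw [hd1 x hx.1 hx.2]; simp
    rw [Finset.sum_congr rfl this]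
    clear * - hab
    induction b, hab using Nat.le_induction with
    | base => simp
    | succ b hab ih =>
      rw [← Finset.insert_Icc_right_eq_Icc_add_one (by omega), Finset.sum_insert (by simp), ih]
      simp
  have hcL : subCharge p L = ∑ x ∈ Finset.Icc a b, (l x : ℂ) * (p x - p (x - 1)) := by
    unfold subCharge
    rw [← hsum l (fun x hx => by have := hld x; rw [hd0 x hx] at this; omega)]
  set q : ℕ → ℝ := fun x => cross2 (p b - p (a - 1)) (p x - p (a - 1)) with hq
  have hcross : cross2 (charge p M) (subCharge p L) =
      ∑ x ∈ Finset.Icc a b, (l x : ℝ) * (q x - q (x - 1)) := by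
    rw [hcM, hcL]
    simp only [cross2, hq, Complex.re_sum, Complex.im_sum, Finset.mul_sum]
    rw [← Finset.sum_sub_distrib]
    refine Finset.sum_congr rfl fun x _ => ?_
    simp
    ring
  rw [hcross, sum_parts (fun x => (l x : ℝ)) q a b hab]
  have hqb : q b = 0 := by simp only [hq, cross2]; ring
  have hqa : q (a - 1) = 0 := by simp [hq, cross2]
  rw [hqb, hqa, mul_zero, mul_zero, sub_zero, zero_add]
  have hqneg : ∀ x, a ≤ x → x < b → ε x = false → q x < 0 := by
    intro x h1 h2 hε
    have := hull_aux n ε p hp 1 (Or.inl rfl) (a - 1) x b (by omega) h2 hb2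
      (by have := (hp.2.2.1 x (by omega) (by omega)).2 hε; linarith)
    simpa using this
  have hqpos : ∀ x, a ≤ x → x < b → ε x = true → 0 < q x := by
    intro x h1 h2 hε
    have := hull_aux n ε p hp (-1) (Or.inr rfl) (a - 1) x b (by omega) h2 hb2
      (by have := (hp.2.2.1 x (by omega) (by omega)).1 hε; linarith)
    simpa using this
  have hterm : ∀ x, a ≤ x → x < b → l x ≠ l (x + 1) →
      q x * ((l x : ℝ) - (l (x + 1) : ℝ)) < 0 := by
    intro x h1 h2 hne
    cases hε : ε x with
    | true =>
      have h3 := hup x h1 h2 hε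
      have h4 := hqpos x h1 h2 hε
      rcases hcases x with h5 | h5 <;> rcases hcases (x + 1) with h6 | h6
      · omega
      · rw [h5, h6]; simpa using h4
      · omega
      · omega
    | false =>
      have h3 := hdown x h1 h2 hε
      have h4 := hqneg x h1 h2 hε
      rcases hcases x with h5 | h5 <;> rcases hcases (x + 1) with h6 | h6
      · omega
      · omega
      · rw [h5, h6]; simpa using h4
      · omega
  refine Finset.sum_neg' ?_ ?_
  · intro x hx
    rw [Finset.mem_Ico] at hx
    by_cases h : l x = l (x + 1)
    · rw [h]; simp
    · exact (hterm x hx.1 hx.2 h).le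
  · by_contra hcon
    push Not at hcon
    have hconst : ∀ x, a ≤ x → x < b → l x = l (x + 1) := by
      intro x h1 h2
      by_contra hne
      exact absurd (hterm x h1 h2 hne) (not_lt.2 (hcon x (Finset.mem_Ico.2 ⟨h1, h2⟩)))
    have hall : ∀ x, a ≤ x → x ≤ b → l x = l a := by
      intro x hx
      induction x, hx using Nat.le_induction with
      | base => intro _; rfl
      | succ x hx ih =>
        intro hxb
        rw [← hconst x hx (by omega)]
        exact ih (by omega)
    have hsub : ∀ x, ¬ (a ≤ x ∧ x ≤ b) → ∀ U : Submodule k (M.V x), U = ⊥ := by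
      intro x hx U
      rw [Submodule.eq_bot_iff]
      intro v _
      exact hz x hx v
    rcases hcases a with h | h
    · obtain ⟨x, hx⟩ := hL0
      apply hx
      by_cases hin : a ≤ x ∧ x ≤ b
      · exact hbot x (by rw [hall x hin.1 hin.2, h])
      · exact hsub x hin _
    · obtain ⟨x, hx⟩ := hL1
      apply hx
      by_cases hin : a ≤ x ∧ x ≤ b
      · exact htop x (by rw [hall x hin.1 hin.2, h])
      · rw [hsub x hin (L.U x), hsub x hin ⊤]

/-- the central charge `Z` takes values in the strict right half plane, the
associated stability function `φ = arg∘Z/π` takes values in `(−1/2, 1/2)`, and every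
indecomposable representation is `φ`-stable. -/
theorem stmt_8 (k : Type) [Field k] (n : ℕ) (ε : ℕ → Bool) (p : ℕ → ℂ)
    (hp : PolyPts n ε p) :
    (∀ M : ARep k n ε, ¬M.IsZero → 0 < (charge p M).re) ∧
    (∀ M : ARep k n ε, ¬M.IsZero →
      Complex.arg (charge p M) / Real.pi ∈ Set.Ioo (-(1 / 2) : ℝ) (1 / 2)) ∧
    (∀ M : ARep k n ε, M.Indec → ∀ L : Subrep M,
      (∃ x, L.U x ≠ ⊥) → (∃ x, L.U x ≠ ⊤) →
      Complex.arg (subCharge p L) / Real.pi < Complex.arg (charge p M) / Real.pi) := by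
  have hpos : ∀ M : ARep k n ε, ¬M.IsZero → 0 < (charge p M).re := by
    intro M hM
    unfold ARep.IsZero at hM
    push Not at hM
    obtain ⟨x, v, hv⟩ := hM
    refine charge_re_pos n p hp.1 (fun x => Module.finrank k (M.V x)) ⟨x, ?_, ?_, ?_⟩
    · by_contra hc; exact hv (M.triv x (by omega) v)
    · by_contra hc; exact hv (M.triv x (by omega) v)
    · exact (Module.finrank_pos_iff_exists_ne_zero.2 ⟨v, hv⟩).ne'
  refine ⟨hpos, ?_, ?_⟩
  · intro M hM
    have h := Complex.abs_arg_lt_pi_div_two_iff.2 (Or.inl (hpos M hM))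
    rw [abs_lt] at h
    have hpi := Real.pi_pos
    constructor
    · rw [lt_div_iff₀ hpi]; linarith
    · rw [div_lt_iff₀ hpi]; linarith
  · intro M hM L h0 h1
    refine div_lt_div_of_pos_right ?_ Real.pi_pos
    refine arg_lt_of_cross ?_ (hpos M hM.1) (stable hp hM L h0 h1)
    obtain ⟨x, hx⟩ := h0
    obtain ⟨v, hvU, hv⟩ := Submodule.exists_mem_ne_zero_of_ne_bot hx
    refine charge_re_pos n p hp.1 (fun x => Module.finrank k (L.U x)) ⟨x, ?_, ?_, ?_⟩
    · by_contra hc; exact hv (M.triv x (by omega) v)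
    · by_contra hc; exact hv (M.triv x (by omega) v)
    · intro h
      exact hx (Submodule.finrank_eq_zero.1 h)

end CambrianA
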